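/- Theorem 1.1 (classification of 3-reflective smooth planar projective billiards). Every 3-reflective triple of C^∞-smooth line-framed curves in ℝ² is right-spherical near its orbits: if (a₁,v₁), (a₂,v₂), (a₃,v₃) is a 3-reflective triple with orbit data (Ω, g), then there exist linearly independent vectors p, q, r ∈ ℝ³ and a nonempty open subset Ω′ ⊆ Ω such that for every (s,u) ∈ Ω′, writing t = g(s,u): (a₁(s),1) ∈ span{p,q}, (a₂(u),1) ∈ span{q,r}, (a₃(t),1) ∈ span{r,p}, and r ∈ span{(a₁(s),1),(v₁(s),0)}, p ∈ span{(a₂(u),1),(v₂(u),0)}, q ∈ span{(a₃(t),1),(v₃(t),0)} in ℝ³ (i.e., viewed in the projective plane, the three boundary curves lie on the three sides of the triangle with vertices [p], [q], [r], and each field line passes through the opposite vertex). -/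

import Mathlib

/-- Two nonzero vectors `u`, `w` of the plane are symmetric with respect to the pair
`(v, τ)` (field direction, tangent direction): there are nonzero scalars `p`, `q` with
`p • u + q • w` on the line spanned by `τ` and `p • u - q • w` on the line spanned by `v`.
This encodes harmonicity (cross-ratio `-1`) of the four lines. -/
def PlaneSym (𝕜 : Type*) [Field 𝕜] (v τ u w : 𝕜 × 𝕜) : Prop :=
  ∃ p q : 𝕜, p ≠ 0 ∧ q ≠ 0 ∧ p • u + q • w ∈ Submodule.span 𝕜 {τ} ∧
    p • u - q • w ∈ Submodule.span 𝕜 {v}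

/-- Lift of a point of the plane to homogeneous coordinates: `x ↦ (x, 1)`. -/
def liftPt (𝕜 : Type*) [Field 𝕜] (x : 𝕜 × 𝕜) : 𝕜 × 𝕜 × 𝕜 := (x.1, x.2, 1)

/-- Lift of a direction of the plane to homogeneous coordinates: `x ↦ (x, 0)`. -/
def liftDir (𝕜 : Type*) [Field 𝕜] (x : 𝕜 × 𝕜) : 𝕜 × 𝕜 × 𝕜 := (x.1, x.2, 0)

section helpers
open Filter Topology

/-- Planar cross product. -/
def cr (p q : ℝ × ℝ) : ℝ := p.1 * q.2 - p.2 * q.1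

theorem cr_ne {τ w : ℝ × ℝ} (hτ : τ ≠ 0) (hw : w ∉ Submodule.span ℝ {τ}) : cr τ w ≠ 0 := by
  intro h
  apply hw
  rw [Submodule.mem_span_singleton]
  unfold cr at h
  by_cases h1 : τ.1 = 0
  · have h2 : τ.2 ≠ 0 := fun h2 => hτ (Prod.ext h1 h2)
    refine ⟨w.2 / τ.2, Prod.ext ?_ ?_⟩
    · have : τ.2 * w.1 = 0 := by rw [h1] at h; linarith
      have : w.1 = 0 := by simpa [h2] using this
      simp [h1, this]
    · simp [h2]
  · refine ⟨w.1 / τ.1, Prod.ext ?_ ?_⟩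
    · simp [h1]
    · simp only [Prod.smul_snd, smul_eq_mul]
      field_simp
      linarith

theorem hasDerivAt_cr {f h : ℝ → ℝ × ℝ} {f' h' : ℝ × ℝ} {x : ℝ}
    (hf : HasDerivAt f f' x) (hh : HasDerivAt h h' x) :
    HasDerivAt (fun y => cr (f y) (h y)) (cr f' (h x) + cr (f x) h') x := by
  have f1 : HasDerivAt (fun y => (f y).1) f'.1 x := hf.fst
  have f2 : HasDerivAt (fun y => (f y).2) f'.2 x := hf.snd
  have h1 : HasDerivAt (fun y => (h y).1) h'.1 x := hh.fst
  have h2 : HasDerivAt (fun y => (h y).2) h'.2 x := hh.snd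
  have := (f1.mul h2).sub (f2.mul h1)
  refine this.congr_deriv ?_
  unfold cr; ring

/-- first-order consequence of the reflection law -/
theorem refl_deriv {u w τ v du dw : ℝ × ℝ} (hv : cr τ v ≠ 0)
    (h0 : cr u τ * cr w v + cr w τ * cr u v = 0)
    (h1 : cr du τ * cr w v + cr u τ * cr dw v + (cr dw τ * cr u v + cr w τ * cr du v) = 0) :
    (cr τ u) ^ 2 * cr dw w + (cr τ w) ^ 2 * cr du u = 0 := by
  apply mul_left_cancel₀ hv
  unfold cr at *
  linear_combination (-(τ.1 * w.2 - τ.2 * w.1) * (τ.1 * u.2 - τ.2 * u.1)) * h1 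
    - ((τ.1 * u.2 - τ.2 * u.1) * (dw.1 * τ.2 - dw.2 * τ.1) + (τ.1 * w.2 - τ.2 * w.1) * (du.1 * τ.2 - du.2 * τ.1)) * h0

theorem planeSym_cr {v τ u w : ℝ × ℝ} (h : ∃ p q : ℝ, p ≠ 0 ∧ q ≠ 0 ∧ p • u + q • w ∈ Submodule.span ℝ {τ} ∧
    p • u - q • w ∈ Submodule.span ℝ {v}) : cr u τ * cr w v + cr w τ * cr u v = 0 := by
  obtain ⟨p, q, hp, hq, h1, h2⟩ := h
  rw [Submodule.mem_span_singleton] at h1 h2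
  obtain ⟨m, hm⟩ := h1
  obtain ⟨n, hn⟩ := h2
  have e1 : p * cr u τ + q * cr w τ = 0 := by
    have a := congrArg Prod.fst hm
    have b := congrArg Prod.snd hm
    simp at a b
    unfold cr
    linear_combination τ.1 * b - τ.2 * a
  have e2 : p * cr u v - q * cr w v = 0 := by
    have a := congrArg Prod.fst hn
    have b := congrArg Prod.snd hn
    simp at a b
    unfold cr
    linear_combination v.1 * b - v.2 * a
  apply mul_left_cancel₀ hp
  apply mul_left_cancel₀ hq
  linear_combination q * cr w v * e1 + q * cr w τ * e2

/-- second order algebra -/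
theorem alg2 {b1 c1 a2 c2 a3 b3 D X1B X1C X2A X2C X3A X3B ab ac bc gs gu m : ℝ}
    (hb1 : b1 ≠ 0) (hc1 : c1 ≠ 0) (ha2 : a2 ≠ 0) (hc2 : c2 ≠ 0) (ha3 : a3 ≠ 0) (hb3 : b3 ≠ 0)
    (hD : D ≠ 0)
    (hab : D * ab = c1 * a2 + b1 * (c2 - a2))
    (hac : D * ac = c1 * (a3 - b3) - b1 * a3)
    (hbc : D * bc = c2 * a3 - c2 * b3 + a2 * b3)
    (E : b1 * c2 * a3 = c1 * a2 * b3)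
    (hgs : gs * (a2 * a3) = - (c1 * c2))
    (hgu : gu * (b1 * b3) = - (c1 * c2))
    (Es : X1B * c2 * a3 + b1 * (bc * gs) * a3 + b1 * c2 * (X3A * gs - ac) =
      (X1C + ac * gs) * a2 * b3 + c1 * (-ab) * b3 + c1 * a2 * (X3B * gs))
    (Eu : ab * c2 * a3 + b1 * (X2C + bc * gu) * a3 + b1 * c2 * (X3A * gu) =
      (ac * gu) * a2 * b3 + c1 * X2A * b3 + c1 * a2 * (X3B * gu - bc))
    (M1 : m * (a2 * a3) + gs * (X2A * a3 + a2 * (X3A * gu)) =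
      - ((ac * gu) * c2 + c1 * (X2C + bc * gu)))
    (M2 : m * (b1 * b3) + gu * (X1B * b3 + b1 * (X3B * gs)) =
      - ((X1C + ac * gs) * c2 + c1 * (bc * gs))) :
    b1 * X1C - c1 * X1B = 0 ∧ c2 * X2A - a2 * X2C = 0 ∧ a3 * X3B - b3 * X3A = 0 := by
  have hgs0 : gs ≠ 0 := by
    rintro rfl; simp at hgs; tauto
  have hgu0 : gu ≠ 0 := by
    rintro rfl; simp at hgu; tauto
  obtain ⟨k1, hk1⟩ : ∃ k1, k1 = X1C / c1 - X1B / b1 := ⟨_, rfl⟩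
  obtain ⟨k2, hk2⟩ : ∃ k2, k2 = X2A / a2 - X2C / c2 := ⟨_, rfl⟩
  obtain ⟨k3, hk3⟩ : ∃ k3, k3 = X3B / b3 - X3A / a3 := ⟨_, rfl⟩
  have hX1 : X1C = c1 * (k1 + X1B / b1) := by rw [hk1]; field_simp; ring
  have hX2 : X2A = a2 * (k2 + X2C / c2) := by rw [hk2]; field_simp; ring
  have hX3 : X3B = b3 * (k3 + X3A / a3) := by rw [hk3]; field_simp; ring
  have hb3' : b3 = b1 * c2 * a3 / (c1 * a2) := by field_simp; linarith
  have hgs' : gs = - (c1 * c2) / (a2 * a3) := by field_simp; linarith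
  have hgu' : gu = - (c1 * c2) / (b1 * b3) := by field_simp; linarith
  have hab' : ab = (c1 * a2 + b1 * (c2 - a2)) / D := by field_simp; linarith
  have hac' : ac = (c1 * (a3 - b3) - b1 * a3) / D := by field_simp; linarith
  have hbc' : bc = (c2 * a3 - c2 * b3 + a2 * b3) / D := by field_simp; linarith
  have F1 : k1 + gs * k3 = 0 := by
    have h1 : (b1 * c2 * a3) * (k1 + gs * k3) =
        b1 * a3 * gs * bc - (b1 * c2 + gs * a2 * b3) * ac + c1 * b3 * ab := by
      have e3 : a3 * (X3A / a3) = X3A := by field_simp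
      have e1 : b1 * (X1B / b1) = X1B := by field_simp
      rw [hX1, hX3] at Es
      linear_combination -Es + (k1 + gs * k3 + X1B / b1 + gs * (X3A / a3)) * E - c2 * a3 * e1
        - b1 * c2 * gs * e3
    have h2 : b1 * a3 * gs * bc - (b1 * c2 + gs * a2 * b3) * ac + c1 * b3 * ab = 0 := by
      rw [hab', hac', hbc', hgs', hb3']
      field_simp
      ring
    rw [h2] at h1
    simpa [hb1, hc2, ha3] using h1
  have F2 : k2 + gu * k3 = 0 := by
    have h1 : (b1 * c2 * a3) * (k2 + gu * k3) =
        ab * c2 * a3 + b1 * bc * gu * a3 - ac * gu * a2 * b3 + c1 * a2 * bc := by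
      have e3 : a3 * (X3A / a3) = X3A := by field_simp
      have e1 : c2 * (X2C / c2) = X2C := by field_simp
      rw [hX2, hX3] at Eu
      linear_combination -Eu + (k2 + gu * k3 + X2C / c2 + gu * (X3A / a3)) * E - b1 * a3 * e1
        - b1 * c2 * gu * e3
    have h2 : ab * c2 * a3 + b1 * bc * gu * a3 - ac * gu * a2 * b3 + c1 * a2 * bc = 0 := by
      rw [hab', hac', hbc', hgu', hb3']
      field_simp
      ring
    rw [h2] at h1
    simpa [hb1, hc2, ha3] using h1
  have F3 : gs * gu * k3 = gs * k2 + gu * k1 := by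
    have M1' : m = gs * (ac * gu / c1 + X2C / c2 + bc * gu / c2 - X2A / a2 - X3A * gu / a3) := by
      rw [hgs'] at M1 ⊢
      field_simp at M1 ⊢
      linear_combination M1
    have M2' : m = gu * (X1C / c1 + ac * gs / c1 + bc * gs / c2 - X1B / b1 - X3B * gs / b3) := by
      have : m * (b1 * b3) = b1 * b3 * gu * (X1C / c1 + ac * gs / c1 + bc * gs / c2 - X1B / b1 - X3B * gs / b3) := by
        have h : b1 * b3 * gu = -(c1 * c2) := by linarith
        have : m * (b1 * b3) = - ((X1C + ac * gs) * c2 + c1 * (bc * gs)) + (b1 * b3 * gu) * (-(X1B / b1) - X3B * gs / b3) := by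
          field_simp
          linear_combination M2
        rw [this, h]
        field_simp
        ring
      apply mul_left_cancel₀ (mul_ne_zero hb1 hb3)
      linear_combination this
    rw [hk1, hk2, hk3]
    linear_combination M2' - M1'
  have k30 : k3 = 0 := by
    have : gs * gu * k3 * 3 = 0 := by linear_combination F3 + gs * F2 + gu * F1
    simpa [hgs0, hgu0] using this
  have k20 : k2 = 0 := by rw [k30] at F2; linarith
  have k10 : k1 = 0 := by rw [k30] at F1; linarith
  subst k30 k20 k10
  rw [hX1, hX2, hX3]
  refine ⟨?_, ?_, ?_⟩ <;> field_simp <;> ring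

theorem refl_path {U W τ v : ℝ → ℝ × ℝ} {du dw : ℝ × ℝ}
    (hU : HasDerivAt U du 0) (hW : HasDerivAt W dw 0) (hτ : HasDerivAt τ 0 0)
    (hv : HasDerivAt v 0 0) (hn : cr (τ 0) (v 0) ≠ 0)
    (h : ∀ᶠ e in 𝓝 (0:ℝ), cr (U e) (τ e) * cr (W e) (v e) + cr (W e) (τ e) * cr (U e) (v e) = 0) :
    (cr (τ 0) (U 0)) ^ 2 * cr dw (W 0) + (cr (τ 0) (W 0)) ^ 2 * cr du (U 0) = 0 := by
  have d := ((hasDerivAt_cr hU hτ).mul (hasDerivAt_cr hW hv)).add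
    ((hasDerivAt_cr hW hτ).mul (hasDerivAt_cr hU hv))
  have d0 : HasDerivAt (fun _ : ℝ => (0:ℝ)) 0 0 := hasDerivAt_const _ _
  have key := d.unique (d0.congr_of_eventuallyEq h)
  apply refl_deriv hn h.self_of_nhds
  simp only [cr] at key ⊢
  simp at key
  linear_combination key

theorem path_s {f : ℝ → ℝ × ℝ} {f' : ℝ × ℝ} {x p : ℝ} (hf : HasDerivAt f f' x) :
    HasDerivAt (fun e => f (x + e * p)) (p • f') 0 := by
  have h : HasDerivAt (fun e : ℝ => x + e * p) p 0 := by
    simpa using ((hasDerivAt_id (0:ℝ)).mul_const p).const_add x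
  exact HasDerivAt.scomp_of_eq (0:ℝ) hf h (by simp)

theorem path_z (z : ℝ × ℝ) (p q : ℝ) :
    HasDerivAt (fun e : ℝ => (z.1 + e * p, z.2 + e * q)) (p, q) 0 := by
  have h : HasDerivAt (fun e : ℝ => z.1 + e * p) p 0 := by
    simpa using ((hasDerivAt_id (0:ℝ)).mul_const p).const_add z.1
  have h' : HasDerivAt (fun e : ℝ => z.2 + e * q) q 0 := by
    simpa using ((hasDerivAt_id (0:ℝ)).mul_const q).const_add z.2
  exact h.prodMk h'

theorem path_g {E : Type*} [NormedAddCommGroup E] [NormedSpace ℝ E] {g : ℝ × ℝ → E} {z : ℝ × ℝ}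
    (hg : DifferentiableAt ℝ g z) (p q : ℝ) :
    HasDerivAt (fun e : ℝ => g (z.1 + e * p, z.2 + e * q)) (fderiv ℝ g z (p, q)) 0 := by
  exact HasFDerivAt.comp_hasDerivAt_of_eq (0:ℝ) hg.hasFDerivAt (path_z z p q) (by simp)

theorem path_t {f : ℝ → ℝ × ℝ} {f' : ℝ × ℝ} {g : ℝ × ℝ → ℝ} {z : ℝ × ℝ}
    (hg : DifferentiableAt ℝ g z) (hf : HasDerivAt f f' (g z)) (p q : ℝ) :
    HasDerivAt (fun e : ℝ => f (g (z.1 + e * p, z.2 + e * q))) (fderiv ℝ g z (p, q) • f') 0 := by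
  exact HasDerivAt.scomp_of_eq (0:ℝ) hf (path_g hg p q) (by simp)

theorem path_mem {Ω : Set (ℝ × ℝ)} (hΩ : IsOpen Ω) {z : ℝ × ℝ} (hz : z ∈ Ω) (p q : ℝ) :
    ∀ᶠ e in 𝓝 (0:ℝ), (z.1 + e * p, z.2 + e * q) ∈ Ω := by
  have := (path_z z p q).continuousAt
  apply this.eventually_mem
  apply hΩ.mem_nhds
  simpa using hz

theorem fderiv_split (g : ℝ × ℝ → ℝ) (z : ℝ × ℝ) (p q : ℝ) :
    fderiv ℝ g z (p, q) = p * fderiv ℝ g z (1, 0) + q * fderiv ℝ g z (0, 1) := by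
  have : ((p, q) : ℝ × ℝ) = p • (1, 0) + q • (0, 1) := by simp
  rw [this, map_add, map_smul, map_smul]; simp

section core
variable {Ω : Set (ℝ × ℝ)} {a b c A B C v1 v2 v3 A2 B2 C2 : ℝ → ℝ × ℝ} {g : ℝ × ℝ → ℝ}

/-- Curves, derivatives and reflection laws -/
structure Data (Ω : Set (ℝ × ℝ)) (a b c A B C v1 v2 v3 A2 B2 C2 : ℝ → ℝ × ℝ)
    (g : ℝ × ℝ → ℝ) : Prop where
  op : IsOpen Ω
  dg : ∀ z ∈ Ω, ContDiffAt ℝ 2 g z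
  da : ∀ z ∈ Ω, HasDerivAt a (A z.1) z.1
  db : ∀ z ∈ Ω, HasDerivAt b (B z.2) z.2
  dc : ∀ z ∈ Ω, HasDerivAt c (C (g z)) (g z)
  dA : ∀ z ∈ Ω, HasDerivAt A (A2 z.1) z.1
  dB : ∀ z ∈ Ω, HasDerivAt B (B2 z.2) z.2
  dC : ∀ z ∈ Ω, HasDerivAt C (C2 (g z)) (g z)
  dv : ∀ z ∈ Ω, DifferentiableAt ℝ v3 (g z)
  n1 : ∀ z ∈ Ω, cr (A z.1) (v1 z.1) ≠ 0
  n2 : ∀ z ∈ Ω, cr (B z.2) (v2 z.2) ≠ 0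
  n3 : ∀ z ∈ Ω, cr (C (g z)) (v3 (g z)) ≠ 0
  b1 : ∀ z ∈ Ω, cr (A z.1) (b z.2 - a z.1) ≠ 0
  c1 : ∀ z ∈ Ω, cr (A z.1) (c (g z) - a z.1) ≠ 0
  a2 : ∀ z ∈ Ω, cr (B z.2) (a z.1 - b z.2) ≠ 0
  c2 : ∀ z ∈ Ω, cr (B z.2) (c (g z) - b z.2) ≠ 0
  a3 : ∀ z ∈ Ω, cr (C (g z)) (a z.1 - c (g z)) ≠ 0
  b3 : ∀ z ∈ Ω, cr (C (g z)) (b z.2 - c (g z)) ≠ 0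
  D : ∀ z ∈ Ω, cr (b z.2 - a z.1) (c (g z) - a z.1) ≠ 0
  r1 : ∀ z ∈ Ω, cr (b z.2 - a z.1) (A z.1) * cr (c (g z) - a z.1) (v1 z.1) +
    cr (c (g z) - a z.1) (A z.1) * cr (b z.2 - a z.1) (v1 z.1) = 0
  r2 : ∀ z ∈ Ω, cr (a z.1 - b z.2) (B z.2) * cr (c (g z) - b z.2) (v2 z.2) +
    cr (c (g z) - b z.2) (B z.2) * cr (a z.1 - b z.2) (v2 z.2) = 0
  r3 : ∀ z ∈ Ω, cr (a z.1 - c (g z)) (C (g z)) * cr (b z.2 - c (g z)) (v3 (g z)) +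
    cr (b z.2 - c (g z)) (C (g z)) * cr (a z.1 - c (g z)) (v3 (g z)) = 0

theorem Data.gd (h : Data Ω a b c A B C v1 v2 v3 A2 B2 C2 g) {z} (hz : z ∈ Ω) :
    DifferentiableAt ℝ g z := (h.dg z hz).differentiableAt (by norm_num)

theorem Data.o1 (h : Data Ω a b c A B C v1 v2 v3 A2 B2 C2 g) {z} (hz : z ∈ Ω) :
    fderiv ℝ g z (0, 1) * ((cr (A z.1) (b z.2 - a z.1)) ^ 2 * cr (C (g z)) (a z.1 - c (g z))) =
      - ((cr (A z.1) (c (g z) - a z.1)) ^ 2 * cr (B z.2) (a z.1 - b z.2)) := by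
  have hgd := h.gd hz
  have key := refl_path (U := fun e => b (z.2 + e * 1) - a z.1)
    (W := fun e => c (g (z.1 + e * 0, z.2 + e * 1)) - a z.1) (τ := fun _ => A z.1)
    (v := fun _ => v1 z.1) ((path_s (h.db z hz)).sub_const _)
    ((path_t hgd (h.dc z hz) 0 1).sub_const _) (hasDerivAt_const _ _) (hasDerivAt_const _ _)
    (h.n1 z hz) (by
      filter_upwards [path_mem h.op hz 0 1] with e he
      simpa using h.r1 _ he)
  simp only [cr] at key ⊢
  simp at key ⊢
  linear_combination -key

theorem Data.o2 (h : Data Ω a b c A B C v1 v2 v3 A2 B2 C2 g) {z} (hz : z ∈ Ω) :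
    fderiv ℝ g z (1, 0) * ((cr (B z.2) (a z.1 - b z.2)) ^ 2 * cr (C (g z)) (b z.2 - c (g z))) =
      - ((cr (B z.2) (c (g z) - b z.2)) ^ 2 * cr (A z.1) (b z.2 - a z.1)) := by
  have hgd := h.gd hz
  have key := refl_path (U := fun e => a (z.1 + e * 1) - b z.2)
    (W := fun e => c (g (z.1 + e * 1, z.2 + e * 0)) - b z.2) (τ := fun _ => B z.2)
    (v := fun _ => v2 z.2) ((path_s (h.da z hz)).sub_const _)
    ((path_t hgd (h.dc z hz) 1 0).sub_const _) (hasDerivAt_const _ _) (hasDerivAt_const _ _)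
    (h.n2 z hz) (by
      filter_upwards [path_mem h.op hz 1 0] with e he
      simpa using h.r2 _ he)
  simp only [cr] at key ⊢
  simp at key ⊢
  linear_combination -key

theorem Data.o3 (h : Data Ω a b c A B C v1 v2 v3 A2 B2 C2 g) {z} (hz : z ∈ Ω) :
    fderiv ℝ g z (1, 0) * ((cr (C (g z)) (a z.1 - c (g z))) ^ 2 * cr (B z.2) (c (g z) - b z.2)) =
    fderiv ℝ g z (0, 1) *
      ((cr (C (g z)) (b z.2 - c (g z))) ^ 2 * cr (A z.1) (c (g z) - a z.1)) := by
  have hgd := h.gd hz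
  obtain ⟨p, hp⟩ : ∃ p, p = fderiv ℝ g z (0, 1) := ⟨_, rfl⟩
  obtain ⟨q, hq⟩ : ∃ q, q = fderiv ℝ g z (1, 0) := ⟨_, rfl⟩
  have h0 : fderiv ℝ g z (p, -q) = 0 := by rw [fderiv_split, hp, hq]; ring
  have e1 := path_t hgd (h.dc z hz) p (-q)
  have e2 := path_t hgd (h.dC z hz) p (-q)
  have e3 := path_t hgd (h.dv z hz).hasDerivAt p (-q)
  rw [h0, zero_smul] at e1 e2 e3
  have key := refl_path (U := fun e => a (z.1 + e * p) - c (g (z.1 + e * p, z.2 + e * (-q))))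
    (W := fun e => b (z.2 + e * (-q)) - c (g (z.1 + e * p, z.2 + e * (-q))))
    ((path_s (h.da z hz)).sub e1) ((path_s (h.db z hz)).sub e1) e2 e3
    (by simpa using h.n3 z hz) (by
      filter_upwards [path_mem h.op hz p (-q)] with e he
      simpa using h.r3 _ he)
  rw [← hp, ← hq]
  simp only [cr] at key ⊢
  simp at key ⊢
  linear_combination key

theorem Data.E1 (h : Data Ω a b c A B C v1 v2 v3 A2 B2 C2 g) {z} (hz : z ∈ Ω) :
    cr (A z.1) (b z.2 - a z.1) * cr (B z.2) (c (g z) - b z.2) * cr (C (g z)) (a z.1 - c (g z)) =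
    cr (A z.1) (c (g z) - a z.1) * cr (B z.2) (a z.1 - b z.2) * cr (C (g z)) (b z.2 - c (g z)) := by
  have o1 := h.o1 hz
  have o2 := h.o2 hz
  have o3 := h.o3 hz
  have := h.b1 z hz
  have := h.c1 z hz
  have := h.a2 z hz
  have := h.c2 z hz
  have := h.a3 z hz
  have := h.b3 z hz
  generalize cr (A z.1) (b z.2 - a z.1) = b1 at *
  generalize cr (A z.1) (c (g z) - a z.1) = c1 at *
  generalize cr (B z.2) (a z.1 - b z.2) = a2 at *
  generalize cr (B z.2) (c (g z) - b z.2) = c2 at *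
  generalize cr (C (g z)) (a z.1 - c (g z)) = a3 at *
  generalize cr (C (g z)) (b z.2 - c (g z)) = b3 at *
  generalize fderiv ℝ g z (0, 1) = gu at *
  generalize fderiv ℝ g z (1, 0) = gs at *
  have k : (b1 * c2 * a3) ^ 3 = (c1 * a2 * b3) ^ 3 := by
    linear_combination (a3 ^ 3 * c2 * b1 ^ 2) * o2 - (c1 * b3 ^ 3 * a2 ^ 2) * o1
      - (b1 ^ 2 * a2 ^ 2 * a3 * b3) * o3
  exact (Odd.strictMono_pow (by decide : Odd 3)).injective k

theorem Data.gs (h : Data Ω a b c A B C v1 v2 v3 A2 B2 C2 g) {z} (hz : z ∈ Ω) :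
    fderiv ℝ g z (1, 0) * (cr (B z.2) (a z.1 - b z.2) * cr (C (g z)) (a z.1 - c (g z))) =
      - (cr (A z.1) (c (g z) - a z.1) * cr (B z.2) (c (g z) - b z.2)) := by
  have o2 := h.o2 hz
  have E := h.E1 hz
  apply mul_left_cancel₀ (mul_ne_zero (h.a2 z hz) (h.b3 z hz))
  linear_combination cr (C (g z)) (a z.1 - c (g z)) * o2 - cr (B z.2) (c (g z) - b z.2) * E

theorem Data.gu (h : Data Ω a b c A B C v1 v2 v3 A2 B2 C2 g) {z} (hz : z ∈ Ω) :
    fderiv ℝ g z (0, 1) * (cr (A z.1) (b z.2 - a z.1) * cr (C (g z)) (b z.2 - c (g z))) =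
      - (cr (A z.1) (c (g z) - a z.1) * cr (B z.2) (c (g z) - b z.2)) := by
  have o1 := h.o1 hz
  have E := h.E1 hz
  apply mul_left_cancel₀ (mul_ne_zero (h.b1 z hz) (h.a3 z hz))
  linear_combination cr (C (g z)) (b z.2 - c (g z)) * o1 + cr (A z.1) (c (g z) - a z.1) * E

theorem Data.curv (h : Data Ω a b c A B C v1 v2 v3 A2 B2 C2 g) {z} (hz : z ∈ Ω) :
    cr (A z.1) (A2 z.1) = 0 ∧ cr (B z.2) (B2 z.2) = 0 ∧ cr (C (g z)) (C2 (g z)) = 0 := by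
  have hgd := h.gd hz
  have hsymm : fderiv ℝ (fderiv ℝ g) z (1, 0) (0, 1) = fderiv ℝ (fderiv ℝ g) z (0, 1) (1, 0) :=
    (h.dg z hz).isSymmSndFDerivAt (by simp) _ _
  have hgd2 : DifferentiableAt ℝ (fderiv ℝ g) z :=
    ((h.dg z hz).fderiv_right (m := 1) (by norm_num)).differentiableAt (by norm_num)
  -- derivatives along `(p, q)`
  have dgs : ∀ p q w1 w2 : ℝ, HasDerivAt
      (fun e : ℝ => fderiv ℝ g (z.1 + e * p, z.2 + e * q) (w1, w2))
      (fderiv ℝ (fderiv ℝ g) z (p, q) (w1, w2)) 0 := by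
    intro p q w1 w2
    have := (path_g hgd2 p q).clm_apply (hasDerivAt_const (0:ℝ) ((w1, w2) : ℝ × ℝ))
    simpa using this
  have d1 : ∀ p q : ℝ, _ := fun p q => hasDerivAt_cr (path_s (p := p) (h.dA z hz))
    ((path_s (p := q) (h.db z hz)).sub (path_s (p := p) (h.da z hz)))
  have d2 : ∀ p q : ℝ, _ := fun p q => hasDerivAt_cr (path_s (p := p) (h.dA z hz))
    ((path_t hgd (h.dc z hz) p q).sub (path_s (p := p) (h.da z hz)))
  have d3 : ∀ p q : ℝ, _ := fun p q => hasDerivAt_cr (path_s (p := q) (h.dB z hz))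
    ((path_s (p := p) (h.da z hz)).sub (path_s (p := q) (h.db z hz)))
  have d4 : ∀ p q : ℝ, _ := fun p q => hasDerivAt_cr (path_s (p := q) (h.dB z hz))
    ((path_t hgd (h.dc z hz) p q).sub (path_s (p := q) (h.db z hz)))
  have d5 : ∀ p q : ℝ, _ := fun p q => hasDerivAt_cr (path_t hgd (h.dC z hz) p q)
    ((path_s (p := p) (h.da z hz)).sub (path_t hgd (h.dc z hz) p q))
  have d6 : ∀ p q : ℝ, _ := fun p q => hasDerivAt_cr (path_t hgd (h.dC z hz) p q)
    ((path_s (p := q) (h.db z hz)).sub (path_t hgd (h.dc z hz) p q))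
  have EE : ∀ p q : ℝ, _ := fun p q => (((d1 p q).mul (d4 p q)).mul (d5 p q)).unique
    ((((d2 p q).mul (d3 p q)).mul (d6 p q)).congr_of_eventuallyEq (by
      filter_upwards [path_mem h.op hz p q] with e he using h.E1 he))
  have Es := EE 1 0
  have Eu := EE 0 1
  have M1 := ((dgs 0 1 1 0).mul ((d3 0 1).mul (d5 0 1))).unique
    (((d2 0 1).mul (d4 0 1)).neg.congr_of_eventuallyEq (by
      filter_upwards [path_mem h.op hz 0 1] with e he using h.gs he))
  have M2 := ((dgs 1 0 0 1).mul ((d1 1 0).mul (d6 1 0))).unique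
    (((d2 1 0).mul (d4 1 0)).neg.congr_of_eventuallyEq (by
      filter_upwards [path_mem h.op hz 1 0] with e he using h.gu he))
  rw [hsymm] at M2
  have hD := h.D z hz
  have key := alg2 (X1B := cr (A2 z.1) (b z.2 - a z.1)) (X1C := cr (A2 z.1) (c (g z) - a z.1))
    (X2A := cr (B2 z.2) (a z.1 - b z.2)) (X2C := cr (B2 z.2) (c (g z) - b z.2))
    (X3A := cr (C2 (g z)) (a z.1 - c (g z))) (X3B := cr (C2 (g z)) (b z.2 - c (g z)))
    (ab := cr (A z.1) (B z.2)) (ac := cr (A z.1) (C (g z))) (bc := cr (B z.2) (C (g z)))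
    (m := fderiv ℝ (fderiv ℝ g) z (0, 1) (1, 0))
    (h.b1 z hz) (h.c1 z hz) (h.a2 z hz) (h.c2 z hz) (h.a3 z hz) (h.b3 z hz) hD
    (by simp only [cr]; simp; ring) (by simp only [cr]; simp; ring) (by simp only [cr]; simp; ring)
    (h.E1 hz) (h.gs hz) (h.gu hz)
    (by
      simp only [cr] at Es ⊢
      simp at Es ⊢
      linear_combination Es)
    (by
      simp only [cr] at Eu ⊢
      simp at Eu ⊢
      linear_combination Eu)
    (by
      simp only [cr] at M1 ⊢
      simp at M1 ⊢
      linear_combination M1)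
    (by
      simp only [cr] at M2 ⊢
      simp at M2 ⊢
      linear_combination M2)
  obtain ⟨k1, k2, k3⟩ := key
  refine ⟨?_, ?_, ?_⟩ <;> apply mul_left_cancel₀ hD
  · simp only [cr, Prod.fst_sub, Prod.snd_sub] at k1 ⊢
    linear_combination k1
  · simp only [cr, Prod.fst_sub, Prod.snd_sub] at k2 ⊢
    linear_combination k2
  · simp only [cr, Prod.fst_sub, Prod.snd_sub] at k3 ⊢
    linear_combination k3
end core

theorem isInvertible_real {L : ℝ →L[ℝ] ℝ} (h : L 1 ≠ 0) : L.IsInvertible := by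
  apply ContinuousLinearMap.IsInvertible.of_inverse (g := (L 1)⁻¹ • ContinuousLinearMap.id ℝ ℝ)
  · ext; simp [h]
  · ext; simp [h]

theorem g_smooth {a b c A v : ℝ → ℝ × ℝ} {C : ℝ × ℝ} {g : ℝ × ℝ → ℝ} {z : ℝ × ℝ}
    (ha : ContDiffAt ℝ 2 a z.1) (hA : ContDiffAt ℝ 2 A z.1) (hv : ContDiffAt ℝ 2 v z.1)
    (hb : ContDiffAt ℝ 2 b z.2) (hc : ContDiffAt ℝ 2 c (g z)) (dc : HasDerivAt c C (g z))
    (hg : ContinuousAt g z)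
    (n1 : cr (A z.1) (v z.1) ≠ 0)
    (b1 : cr (A z.1) (b z.2 - a z.1) ≠ 0)
    (a3 : cr C (a z.1 - c (g z)) ≠ 0)
    (r1 : ∀ᶠ z in 𝓝 z, cr (b z.2 - a z.1) (A z.1) * cr (c (g z) - a z.1) (v z.1) +
    cr (c (g z) - a z.1) (A z.1) * cr (b z.2 - a z.1) (v z.1) = 0) : ContDiffAt ℝ 2 g z := by
  obtain ⟨F, hF⟩ : ∃ F : (ℝ × ℝ) × ℝ → ℝ, F = fun y =>
    cr (b y.1.2 - a y.1.1) (A y.1.1) * cr (c y.2 - a y.1.1) (v y.1.1) +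
    cr (c y.2 - a y.1.1) (A y.1.1) * cr (b y.1.2 - a y.1.1) (v y.1.1) := ⟨_, rfl⟩
  have cdf : ContDiffAt ℝ 2 F (z, g z) := by
    have p1 : ContDiffAt ℝ 2 (fun y : (ℝ × ℝ) × ℝ => y.1.1) (z, g z) := by fun_prop
    have p2 : ContDiffAt ℝ 2 (fun y : (ℝ × ℝ) × ℝ => y.1.2) (z, g z) := by fun_prop
    have p3 : ContDiffAt ℝ 2 (fun y : (ℝ × ℝ) × ℝ => y.2) (z, g z) := by fun_prop
    have ha' : ContDiffAt ℝ 2 (fun y : (ℝ × ℝ) × ℝ => a y.1.1) (z, g z) :=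
      ContDiffAt.comp (g := a) (z, g z) ha p1
    have hA' : ContDiffAt ℝ 2 (fun y : (ℝ × ℝ) × ℝ => A y.1.1) (z, g z) :=
      ContDiffAt.comp (g := A) (z, g z) hA p1
    have hv' : ContDiffAt ℝ 2 (fun y : (ℝ × ℝ) × ℝ => v y.1.1) (z, g z) :=
      ContDiffAt.comp (g := v) (z, g z) hv p1
    have hb' : ContDiffAt ℝ 2 (fun y : (ℝ × ℝ) × ℝ => b y.1.2) (z, g z) :=
      ContDiffAt.comp (g := b) (z, g z) hb p2
    have hc' : ContDiffAt ℝ 2 (fun y : (ℝ × ℝ) × ℝ => c y.2) (z, g z) :=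
      ContDiffAt.comp (g := c) (z, g z) hc p3
    rw [hF]
    unfold cr
    fun_prop
  have dF : fderiv ℝ F (z, g z) (0, 1) = cr (b z.2 - a z.1) (A z.1) * cr C (v z.1) +
      cr C (A z.1) * cr (b z.2 - a z.1) (v z.1) := by
    have e1 : HasDerivAt (fun t : ℝ => (z, t)) ((0 : ℝ × ℝ), (1 : ℝ)) (g z) :=
      (hasDerivAt_const _ _).prodMk (hasDerivAt_id _)
    have e2 : HasDerivAt (fun t : ℝ => F (z, t)) (fderiv ℝ F (z, g z) (0, 1)) (g z) :=
      HasFDerivAt.comp_hasDerivAt_of_eq (g z)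
        (cdf.differentiableAt (by norm_num)).hasFDerivAt e1 rfl
    have e3 := ((hasDerivAt_const (g z) (cr (b z.2 - a z.1) (A z.1))).mul
      (hasDerivAt_cr (dc.sub_const (a z.1)) (hasDerivAt_const _ (v z.1)))).add
      ((hasDerivAt_cr (dc.sub_const (a z.1)) (hasDerivAt_const _ (A z.1))).mul
      (hasDerivAt_const (g z) (cr (b z.2 - a z.1) (v z.1))))
    rw [hF] at e2 ⊢
    rw [e2.unique e3]
    simp [cr]
  have r0 := r1.self_of_nhds
  have hne : fderiv ℝ F (z, g z) (0, 1) ≠ 0 := by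
    rw [dF]
    intro h0
    have : cr (A z.1) (b z.2 - a z.1) * cr (A z.1) (v z.1) * cr C (a z.1 - c (g z)) = 0 := by
      generalize A z.1 = τ at *
      generalize v z.1 = v at *
      simp only [cr, Prod.fst_sub, Prod.snd_sub] at *
      linear_combination (τ.1 * ((c (g z)).2 - (a z.1).2) - τ.2 * ((c (g z)).1 - (a z.1).1)) * h0
        + (C.1 * τ.2 - C.2 * τ.1) * r0
    simp [n1, b1, a3] at this
  have hinv : (fderiv ℝ F (z, g z) ∘L .inr ℝ (ℝ × ℝ) ℝ).IsInvertible := by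
    apply isInvertible_real
    simpa using hne
  have hs := cdf.contDiffAt_implicitFunction (by norm_num) hinv
  refine hs.congr_of_eventuallyEq ?_
  have ht : Tendsto (fun z' => (z', g z')) (𝓝 z) (𝓝 (z, g z)) :=
    (continuousAt_id.prodMk hg)
  filter_upwards [ht.eventually (cdf.eventually_apply_eq_iff_implicitFunction (by norm_num) hinv), r1]
    with z' h1 h2
  refine (h1.1 ?_).symm
  rw [hF]
  simp only
  rw [h2, r0]

theorem const_of_deriv {S : Set ℝ} (hS : IsPreconnected S) {f f' : ℝ → ℝ}
    (hf : ∀ t ∈ S, HasDerivAt f (f' t) t) (h0 : ∀ t ∈ S, f' t = 0) {x y : ℝ} (hx : x ∈ S)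
    (hy : y ∈ S) : f y = f x := by
  have := Convex.norm_image_sub_le_of_norm_hasDerivWithin_le (C := 0)
    (fun t ht => (hf t ht).hasDerivWithinAt) (fun t ht => by simp [h0 t ht])
    (Real.convex_iff_isPreconnected.2 hS) hx hy
  simpa [sub_eq_zero] using this

/-- dot product -/
def dt (p q : ℝ × ℝ) : ℝ := p.1 * q.1 + p.2 * q.2

theorem dt_self {p : ℝ × ℝ} (h : p ≠ 0) : dt p p ≠ 0 := by
  intro h0
  apply h
  unfold dt at h0
  exact Prod.ext (by simp; nlinarith [sq_nonneg p.1, sq_nonneg p.2])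
    (by simp; nlinarith [sq_nonneg p.1, sq_nonneg p.2])

theorem line_of_curv {S : Set ℝ} (hS : IsPreconnected S) {a A A2 : ℝ → ℝ × ℝ} {t0 : ℝ}
    (ht0 : t0 ∈ S) (da : ∀ t ∈ S, HasDerivAt a (A t) t) (dA : ∀ t ∈ S, HasDerivAt A (A2 t) t)
    (hk : ∀ t ∈ S, cr (A t) (A2 t) = 0) (hd : ∀ t ∈ S, dt (A t0) (A t) ≠ 0) :
    ∀ t ∈ S, cr (A t0) (A t) = 0 ∧ cr (A t0) (a t - a t0) = 0 := by
  have dcr : ∀ t ∈ S, HasDerivAt (fun t => cr (A t0) (A t)) (cr (A t0) (A2 t)) t := by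
    intro t ht
    have := hasDerivAt_cr (hasDerivAt_const t (A t0)) (dA t ht)
    refine this.congr_deriv ?_
    simp [cr]
  have ddt : ∀ t ∈ S, HasDerivAt (fun t => dt (A t0) (A t)) (dt (A t0) (A2 t)) t := by
    intro t ht
    have f1 : HasDerivAt (fun y => (A y).1) (A2 t).1 t := (dA t ht).fst
    have f2 : HasDerivAt (fun y => (A y).2) (A2 t).2 t := (dA t ht).snd
    exact (f1.const_mul (A t0).1).add (f2.const_mul (A t0).2)
  have h1 : ∀ t ∈ S, cr (A t0) (A t) = 0 := by
    intro t ht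
    have := const_of_deriv hS (f := fun t => cr (A t0) (A t) / dt (A t0) (A t))
      (fun t ht => (dcr t ht).div (ddt t ht) (hd t ht)) (fun t ht => by
        rw [div_eq_zero_iff]; left
        have := hk t ht
        unfold cr at this
        unfold cr dt
        linear_combination ((A t0).1 ^ 2 + (A t0).2 ^ 2) * this) ht0 ht
    have h0 : cr (A t0) (A t0) = 0 := by unfold cr; ring
    simp only [h0, zero_div, div_eq_zero_iff] at this
    exact this.resolve_right (hd t ht)
  intro t ht
  refine ⟨h1 t ht, ?_⟩
  have := const_of_deriv hS (f := fun t => cr (A t0) (a t - a t0))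
    (fun t ht => hasDerivAt_cr (hasDerivAt_const t (A t0)) ((da t ht).sub_const (a t0)))
    (fun t ht => by
      have := h1 t ht
      simpa [cr] using this) ht0 ht
  rw [this]; simp [cr]

/-- The linear form of the line through `x` with direction `τ`. -/
def ln (x τ : ℝ × ℝ) : ℝ × ℝ × ℝ →ₗ[ℝ] ℝ where
  toFun X := τ.1 * (X.2.1 - X.2.2 * x.2) - τ.2 * (X.1 - X.2.2 * x.1)
  map_add' X Y := by simp; ring
  map_smul' k X := by simp; ring

theorem ln_apply (x τ : ℝ × ℝ) (X : ℝ × ℝ × ℝ) :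
    ln x τ X = τ.1 * (X.2.1 - X.2.2 * x.2) - τ.2 * (X.1 - X.2.2 * x.1) := rfl

theorem ln_lift (x τ y : ℝ × ℝ) : ln x τ (liftPt ℝ y) = cr τ (y - x) := by
  simp [ln_apply, liftPt, cr]

theorem ln_move {x x0 τ τ0 : ℝ × ℝ} (h0 : τ0 ≠ 0) (h1 : cr τ0 τ = 0) (h2 : cr τ0 (x - x0) = 0)
    {X : ℝ × ℝ × ℝ} (h : ln x0 τ0 X = 0) : ln x τ X = 0 := by
  rw [ln_apply] at *
  simp only [cr, Prod.fst_sub, Prod.snd_sub] at h1 h2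
  by_cases h3 : τ0.1 = 0
  · have h4 : τ0.2 ≠ 0 := fun h4 => h0 (Prod.ext h3 h4)
    apply mul_left_cancel₀ h4
    linear_combination τ.2 * h - X.2.2 * τ.2 * h2 - (X.2.1 - X.2.2 * x.2) * h1
  · apply mul_left_cancel₀ h3
    linear_combination τ.1 * h - X.2.2 * τ.1 * h2 - (X.1 - X.2.2 * x.1) * h1

theorem mem_span_of_ln {x v : ℝ × ℝ} (hv : v ≠ 0) {X : ℝ × ℝ × ℝ} (h : ln x v X = 0) :
    X ∈ Submodule.span ℝ {liftPt ℝ x, liftDir ℝ v} := by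
  have : ((X.1 - X.2.2 * x.1, X.2.1 - X.2.2 * x.2) : ℝ × ℝ) ∈ Submodule.span ℝ {v} := by
    by_contra hc
    exact cr_ne hv hc h
  rw [Submodule.mem_span_singleton] at this
  obtain ⟨k, hk⟩ := this
  rw [Submodule.mem_span_pair]
  have k1 := congrArg Prod.fst hk
  have k2 := congrArg Prod.snd hk
  simp at k1 k2
  refine ⟨X.2.2, k, Prod.ext ?_ (Prod.ext ?_ ?_)⟩ <;> simp [liftPt, liftDir] <;> linarith

/-- If the point `X` is on the tangent lines at `b`, `c` then it is on the field line at `a`. -/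
theorem field_pass {a b c A B C v : ℝ × ℝ} {X : ℝ × ℝ × ℝ}
    (b1 : cr A (b - a) ≠ 0) (a2 : cr B (a - b) ≠ 0) (b3 : cr C (b - c) ≠ 0)
    (D : cr (b - a) (c - a) ≠ 0)
    (E : cr A (b - a) * cr B (c - b) * cr C (a - c) = cr A (c - a) * cr B (a - b) * cr C (b - c))
    (r : cr (b - a) A * cr (c - a) v + cr (c - a) A * cr (b - a) v = 0)
    (h2 : ln b B X = 0) (h3 : ln c C X = 0) : ln a v X = 0 := by
  -- barycentric coordinates of `X` (times `D`)
  obtain ⟨y, hy⟩ : ∃ y : ℝ × ℝ, y = (X.1 - X.2.2 * a.1, X.2.1 - X.2.2 * a.2) := ⟨_, rfl⟩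
  obtain ⟨β, hβ⟩ : ∃ β, β = cr y (c - a) := ⟨_, rfl⟩
  obtain ⟨γ, hγ⟩ : ∃ γ, γ = cr (b - a) y := ⟨_, rfl⟩
  obtain ⟨α, hα⟩ : ∃ α, α = X.2.2 * cr (b - a) (c - a) - β - γ := ⟨_, rfl⟩
  have e2 : α * cr B (a - b) + γ * cr B (c - b) = 0 := by
    rw [ln_apply] at h2
    rw [hα, hβ, hγ, hy]
    simp only [cr, Prod.fst_sub, Prod.snd_sub]
    linear_combination ((b.1 - a.1) * (c.2 - a.2) - (b.2 - a.2) * (c.1 - a.1)) * h2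
  have e3 : α * cr C (a - c) + β * cr C (b - c) = 0 := by
    rw [ln_apply] at h3
    rw [hα, hβ, hγ, hy]
    simp only [cr, Prod.fst_sub, Prod.snd_sub]
    linear_combination ((b.1 - a.1) * (c.2 - a.2) - (b.2 - a.2) * (c.1 - a.1)) * h3
  have e4 : cr (b - a) (c - a) * ln a v X = - (β * cr (b - a) v + γ * cr (c - a) v) := by
    rw [hβ, hγ, hy, ln_apply]
    simp only [cr, Prod.fst_sub, Prod.snd_sub]
    ring
  have e5 : γ * cr A (c - a) = β * cr A (b - a) := by
    apply mul_left_cancel₀ (mul_ne_zero a2 b3)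
    linear_combination - γ * E + cr A (b - a) * cr C (a - c) * e2 - cr A (b - a) * cr B (a - b) * e3
  have r' : cr A (b - a) * cr (c - a) v + cr A (c - a) * cr (b - a) v = 0 := by
    simp only [cr, Prod.fst_sub, Prod.snd_sub] at r ⊢
    linear_combination -r
  apply mul_left_cancel₀ D
  rw [e4, mul_zero]
  apply mul_left_cancel₀ b1
  linear_combination -γ * r' + cr (b - a) v * e5

theorem indep_of_diag {P Q R : ℝ × ℝ × ℝ} {l1 l2 l3 : ℝ × ℝ × ℝ →ₗ[ℝ] ℝ}
    (h1P : l1 P = 0) (h1Q : l1 Q = 0) (h1R : l1 R ≠ 0) (h2P : l2 P ≠ 0) (h2Q : l2 Q = 0)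
    (h2R : l2 R = 0) (h3P : l3 P = 0) (h3Q : l3 Q ≠ 0) (h3R : l3 R = 0) :
    LinearIndependent ℝ ![P, Q, R] := by
  rw [Fintype.linearIndependent_iff]
  intro k hk
  simp only [Fin.sum_univ_three, Matrix.cons_val] at hk
  have e1 := congrArg l1 hk
  have e2 := congrArg l2 hk
  have e3 := congrArg l3 hk
  simp [h1P, h1Q, h1R, h2P, h2Q, h2R, h3P, h3Q, h3R] at e1 e2 e3
  intro i
  fin_cases i <;> simp [e1, e2, e3]

theorem mem_pair_of_diag {P Q R X : ℝ × ℝ × ℝ} {l : ℝ × ℝ × ℝ →ₗ[ℝ] ℝ}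
    (hi : LinearIndependent ℝ ![P, Q, R]) (hP : l P = 0) (hQ : l Q = 0) (hR : l R ≠ 0)
    (hX : l X = 0) : X ∈ Submodule.span ℝ {P, Q} := by
  have ht := hi.span_eq_top_of_card_eq_finrank (by simp)
  have hm : X ∈ Submodule.span ℝ (Set.range ![P, Q, R]) := by rw [ht]; trivial
  rw [Submodule.mem_span_range_iff_exists_fun] at hm
  obtain ⟨k, hk⟩ := hm
  simp only [Fin.sum_univ_three, Matrix.cons_val] at hk
  have e := congrArg l hk
  simp [hP, hQ, hX, hR] at e
  rw [Submodule.mem_span_pair]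
  exact ⟨k 0, k 1, by rw [← hk, e]; simp⟩

theorem collinear_of_cr {x y z : ℝ × ℝ} (h : cr (y - x) (z - x) = 0) (hne : y ≠ x) :
    Collinear ℝ {x, y, z} := by
  rw [collinear_iff_of_mem (p₀ := x) (by simp)]
  have : z - x ∈ Submodule.span ℝ {y - x} := by
    by_contra hc
    exact cr_ne (sub_ne_zero.2 hne) hc h
  rw [Submodule.mem_span_singleton] at this
  obtain ⟨k, hk⟩ := this
  refine ⟨y - x, ?_⟩
  intro p hp
  simp only [Set.mem_insert_iff, Set.mem_singleton_iff] at hp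
  rcases hp with rfl | rfl | rfl
  · exact ⟨0, by simp⟩
  · exact ⟨1, by simp⟩
  · exact ⟨k, by rw [hk]; simp⟩

theorem final {Ω : Set (ℝ × ℝ)} {a b c A B C v1 v2 v3 A2 B2 C2 : ℝ → ℝ × ℝ} {g : ℝ × ℝ → ℝ}
    (h : Data Ω a b c A B C v1 v2 v3 A2 B2 C2 g) (hne : Ω.Nonempty) :
    ∃ P Q R : ℝ × ℝ × ℝ, LinearIndependent ℝ ![P, Q, R] ∧
      ∃ Ω' : Set (ℝ × ℝ), Ω' ⊆ Ω ∧ Ω'.Nonempty ∧ IsOpen Ω' ∧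
        ∀ z ∈ Ω',
          liftPt ℝ (a z.1) ∈ Submodule.span ℝ {P, Q} ∧
          liftPt ℝ (b z.2) ∈ Submodule.span ℝ {Q, R} ∧
          liftPt ℝ (c (g z)) ∈ Submodule.span ℝ {R, P} ∧
          R ∈ Submodule.span ℝ {liftPt ℝ (a z.1), liftDir ℝ (v1 z.1)} ∧
          P ∈ Submodule.span ℝ {liftPt ℝ (b z.2), liftDir ℝ (v2 z.2)} ∧
          Q ∈ Submodule.span ℝ {liftPt ℝ (c (g z)), liftDir ℝ (v3 (g z))} := by
  obtain ⟨z0, hz0⟩ := hne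
  have crz : ∀ x : ℝ × ℝ, cr 0 x = 0 := by intro x; simp [cr]
  have crz' : ∀ x : ℝ × ℝ, cr x 0 = 0 := by intro x; simp [cr]
  have nA : A z0.1 ≠ 0 := fun e => h.b1 z0 hz0 (by rw [e, crz])
  have nB : B z0.2 ≠ 0 := fun e => h.a2 z0 hz0 (by rw [e, crz])
  have nC : C (g z0) ≠ 0 := fun e => h.a3 z0 hz0 (by rw [e, crz])
  -- a small ball
  have cA : ContinuousAt (fun z : ℝ × ℝ => A z.1) z0 :=
    ContinuousAt.comp (g := A) (h.dA z0 hz0).continuousAt continuousAt_fst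
  have cB : ContinuousAt (fun z : ℝ × ℝ => B z.2) z0 :=
    ContinuousAt.comp (g := B) (h.dB z0 hz0).continuousAt continuousAt_snd
  have cC : ContinuousAt (fun z : ℝ × ℝ => C (g z)) z0 :=
    ContinuousAt.comp (g := C) (h.dC z0 hz0).continuousAt (h.dg z0 hz0).continuousAt
  have cdt : ∀ (p : ℝ × ℝ), Continuous (fun q => dt p q) := by
    intro p; unfold dt; fun_prop
  have ev : ∀ᶠ z in 𝓝 z0, z ∈ Ω ∧ dt (A z0.1) (A z.1) ≠ 0 ∧ dt (B z0.2) (B z.2) ≠ 0 ∧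
      dt (C (g z0)) (C (g z)) ≠ 0 := by
    filter_upwards [h.op.mem_nhds hz0,
      ((cdt (A z0.1)).continuousAt.comp cA).eventually_ne (dt_self nA),
      ((cdt (B z0.2)).continuousAt.comp cB).eventually_ne (dt_self nB),
      ((cdt (C (g z0))).continuousAt.comp cC).eventually_ne (dt_self nC)] with z h1 h2 h3 h4
      using ⟨h1, h2, h3, h4⟩
  obtain ⟨ε, hε, hball⟩ := Metric.eventually_nhds_iff_ball.1 ev
  have hz0b : z0 ∈ Metric.ball z0 ε := Metric.mem_ball_self hε
  have pc : IsPreconnected (Metric.ball z0 ε) := (convex_ball z0 ε).isPreconnected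
  have gcont : ContinuousOn g (Metric.ball z0 ε) := fun z hz =>
    (h.dg z (hball z hz).1).continuousAt.continuousWithinAt
  have LA := line_of_curv (pc.image (fun z => z.1) continuous_fst.continuousOn)
    (a := a) (A := A) (A2 := A2) (t0 := z0.1) ⟨z0, hz0b, rfl⟩
    (by rintro _ ⟨z, hz, rfl⟩; exact h.da z (hball z hz).1)
    (by rintro _ ⟨z, hz, rfl⟩; exact h.dA z (hball z hz).1)
    (by rintro _ ⟨z, hz, rfl⟩; exact (h.curv (hball z hz).1).1)
    (by rintro _ ⟨z, hz, rfl⟩; exact (hball z hz).2.1)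
  have LB := line_of_curv (pc.image (fun z => z.2) continuous_snd.continuousOn)
    (a := b) (A := B) (A2 := B2) (t0 := z0.2) ⟨z0, hz0b, rfl⟩
    (by rintro _ ⟨z, hz, rfl⟩; exact h.db z (hball z hz).1)
    (by rintro _ ⟨z, hz, rfl⟩; exact h.dB z (hball z hz).1)
    (by rintro _ ⟨z, hz, rfl⟩; exact (h.curv (hball z hz).1).2.1)
    (by rintro _ ⟨z, hz, rfl⟩; exact (hball z hz).2.2.1)
  have LC := line_of_curv (pc.image g gcont)
    (a := c) (A := C) (A2 := C2) (t0 := g z0) ⟨z0, hz0b, rfl⟩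
    (by rintro _ ⟨z, hz, rfl⟩; exact h.dc z (hball z hz).1)
    (by rintro _ ⟨z, hz, rfl⟩; exact h.dC z (hball z hz).1)
    (by rintro _ ⟨z, hz, rfl⟩; exact (h.curv (hball z hz).1).2.2)
    (by rintro _ ⟨z, hz, rfl⟩; exact (hball z hz).2.2.2)
  -- the triangle
  have E := h.E1 hz0
  have hb1 := h.b1 z0 hz0
  have hc1 := h.c1 z0 hz0
  have ha2 := h.a2 z0 hz0
  have hc2 := h.c2 z0 hz0
  have ha3 := h.a3 z0 hz0
  have hb3 := h.b3 z0 hz0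
  obtain ⟨l1, hl1⟩ : ∃ l, l = ln (a z0.1) (A z0.1) := ⟨_, rfl⟩
  obtain ⟨l2, hl2⟩ : ∃ l, l = ln (b z0.2) (B z0.2) := ⟨_, rfl⟩
  obtain ⟨l3, hl3⟩ : ∃ l, l = ln (c (g z0)) (C (g z0)) := ⟨_, rfl⟩
  obtain ⟨pA, hpA⟩ : ∃ p, p = liftPt ℝ (a z0.1) := ⟨_, rfl⟩
  obtain ⟨pB, hpB⟩ : ∃ p, p = liftPt ℝ (b z0.2) := ⟨_, rfl⟩
  obtain ⟨pC, hpC⟩ : ∃ p, p = liftPt ℝ (c (g z0)) := ⟨_, rfl⟩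
  have l1A : l1 pA = 0 := by rw [hl1, hpA, ln_lift, sub_self, crz']
  have l2B : l2 pB = 0 := by rw [hl2, hpB, ln_lift, sub_self, crz']
  have l3C : l3 pC = 0 := by rw [hl3, hpC, ln_lift, sub_self, crz']
  have l1B : l1 pB = cr (A z0.1) (b z0.2 - a z0.1) := by rw [hl1, hpB, ln_lift]
  have l1C : l1 pC = cr (A z0.1) (c (g z0) - a z0.1) := by rw [hl1, hpC, ln_lift]
  have l2A : l2 pA = cr (B z0.2) (a z0.1 - b z0.2) := by rw [hl2, hpA, ln_lift]
  have l2C : l2 pC = cr (B z0.2) (c (g z0) - b z0.2) := by rw [hl2, hpC, ln_lift]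
  have l3A : l3 pA = cr (C (g z0)) (a z0.1 - c (g z0)) := by rw [hl3, hpA, ln_lift]
  have l3B : l3 pB = cr (C (g z0)) (b z0.2 - c (g z0)) := by rw [hl3, hpB, ln_lift]
  rw [← l1B] at hb1
  rw [← l1C] at hc1
  rw [← l2A] at ha2
  rw [← l2C] at hc2
  rw [← l3A] at ha3
  rw [← l3B] at hb3
  rw [← l1B, ← l1C, ← l2A, ← l2C, ← l3A, ← l3B] at E
  clear l1B l1C l2A l2C l3A l3B
  obtain ⟨P, hP⟩ : ∃ P, P = (l3 pB * l1 pC) • pA - (l3 pA * l1 pC) • pB + (l3 pA * l1 pB) • pC :=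
    ⟨_, rfl⟩
  obtain ⟨Q, hQ⟩ : ∃ Q, Q = (l1 pB * l2 pC) • pA + (l1 pC * l2 pA) • pB - (l1 pB * l2 pA) • pC :=
    ⟨_, rfl⟩
  obtain ⟨R, hR⟩ : ∃ R, R = (l2 pC * l3 pA) • pB + (l2 pA * l3 pB) • pC - (l2 pC * l3 pB) • pA :=
    ⟨_, rfl⟩
  have nz : 2 * (l1 pB * l2 pC * l3 pA) ≠ 0 := by simp [hb1, hc2, ha3]
  have h1P : l1 P = 0 := by rw [hP]; simp [l1A]; ring
  have h3P : l3 P = 0 := by rw [hP]; simp [l3C]; ring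
  have h2P : l2 P ≠ 0 := by
    have : l2 P = 2 * (l1 pB * l2 pC * l3 pA) := by
      rw [hP]; simp [l2B]; linear_combination -E
    rwa [this]
  have h1Q : l1 Q = 0 := by rw [hQ]; simp [l1A]; ring
  have h2Q : l2 Q = 0 := by rw [hQ]; simp [l2B]; ring
  have h3Q : l3 Q ≠ 0 := by
    have : l3 Q = 2 * (l1 pB * l2 pC * l3 pA) := by
      rw [hQ]; simp [l3C]; linear_combination -E
    rwa [this]
  have h2R : l2 R = 0 := by rw [hR]; simp [l2B]; ring
  have h3R : l3 R = 0 := by rw [hR]; simp [l3C]; ring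
  have h1R : l1 R ≠ 0 := by
    have : l1 R = 2 * (l1 pB * l2 pC * l3 pA) := by
      rw [hR]; simp [l1A]; linear_combination -E
    rwa [this]
  have ind : LinearIndependent ℝ ![P, Q, R] :=
    indep_of_diag h1P h1Q h1R h2P h2Q h2R h3P h3Q h3R
  have ind2 : LinearIndependent ℝ ![Q, R, P] :=
    indep_of_diag h2Q h2R h2P h3Q h3R h3P h1Q h1R h1P
  have ind3 : LinearIndependent ℝ ![R, P, Q] :=
    indep_of_diag h3R h3P h3Q h1R h1P h1Q h2R h2P h2Q
  refine ⟨P, Q, R, ind, Metric.ball z0 ε, fun z hz => (hball z hz).1, ⟨z0, hz0b⟩,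
    Metric.isOpen_ball, ?_⟩
  intro z hz
  have hzΩ := (hball z hz).1
  obtain ⟨tA, pA'⟩ := LA z.1 ⟨z, hz, rfl⟩
  obtain ⟨tB, pB'⟩ := LB z.2 ⟨z, hz, rfl⟩
  obtain ⟨tC, pC'⟩ := LC (g z) ⟨z, hz, rfl⟩
  have mA : ∀ X, l1 X = 0 → ln (a z.1) (A z.1) X = 0 := fun X hX =>
    ln_move nA tA pA' (by rw [← hl1]; exact hX)
  have mB : ∀ X, l2 X = 0 → ln (b z.2) (B z.2) X = 0 := fun X hX =>
    ln_move nB tB pB' (by rw [← hl2]; exact hX)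
  have mC : ∀ X, l3 X = 0 → ln (c (g z)) (C (g z)) X = 0 := fun X hX =>
    ln_move nC tC pC' (by rw [← hl3]; exact hX)
  have nv1 : v1 z.1 ≠ 0 := fun e => h.n1 z hzΩ (by rw [e, crz'])
  have nv2 : v2 z.2 ≠ 0 := fun e => h.n2 z hzΩ (by rw [e, crz'])
  have nv3 : v3 (g z) ≠ 0 := fun e => h.n3 z hzΩ (by rw [e, crz'])
  have Ez := h.E1 hzΩ
  have Dz := h.D z hzΩ
  refine ⟨mem_pair_of_diag ind h1P h1Q h1R (by rw [hl1, ln_lift]; exact pA'),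
    mem_pair_of_diag ind2 h2Q h2R h2P (by rw [hl2, ln_lift]; exact pB'),
    mem_pair_of_diag ind3 h3R h3P h3Q (by rw [hl3, ln_lift]; exact pC'),
    mem_span_of_ln nv1 ?_, mem_span_of_ln nv2 ?_, mem_span_of_ln nv3 ?_⟩
  · exact field_pass (h.b1 z hzΩ) (h.a2 z hzΩ) (h.b3 z hzΩ) Dz Ez (h.r1 z hzΩ) (mB R h2R) (mC R h3R)
  · refine field_pass (b := a z.1) (c := c (g z)) (h.a2 z hzΩ) (h.b1 z hzΩ) (h.a3 z hzΩ) ?_ ?_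
      (h.r2 z hzΩ) (mA P h1P) (mC P h3P)
    · intro e
      apply Dz
      simp only [cr, Prod.fst_sub, Prod.snd_sub] at e ⊢
      linear_combination -e
    · linear_combination -Ez
  · refine field_pass (b := b z.2) (c := a z.1) (A := C (g z)) (h.b3 z hzΩ) (h.c2 z hzΩ)
      (h.b1 z hzΩ) ?_ ?_ ?_ (mB Q h2Q) (mA Q h1Q)
    · intro e
      apply Dz
      simp only [cr, Prod.fst_sub, Prod.snd_sub] at e ⊢
      linear_combination -e
    · linear_combination -Ez
    · linear_combination h.r3 z hzΩ

end helpers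

/-- **Theorem 1.1.** Every 3-reflective triple of `C^∞`-smooth line-framed curves in `ℝ²`
is right-spherical near its orbits. -/
theorem no_3_reflective_smooth_planar_projective_billiard_except_right_spherical
    (U₁ U₂ U₃ : Set ℝ) (a₁ a₂ a₃ v₁ v₂ v₃ : ℝ → ℝ × ℝ)
    (hU₁o : IsOpen U₁) (hU₂o : IsOpen U₂) (hU₃o : IsOpen U₃)
    (hU₁c : IsConnected U₁) (hU₂c : IsConnected U₂) (hU₃c : IsConnected U₃)
    -- the `(aᵢ, vᵢ)` are smooth line-framed curves
    (ha₁ : ContDiffOn ℝ (⊤ : ℕ∞) a₁ U₁) (ha₂ : ContDiffOn ℝ (⊤ : ℕ∞) a₂ U₂)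
    (ha₃ : ContDiffOn ℝ (⊤ : ℕ∞) a₃ U₃)
    (ha₁i : Set.InjOn a₁ U₁) (ha₂i : Set.InjOn a₂ U₂) (ha₃i : Set.InjOn a₃ U₃)
    (ha₁' : ∀ s ∈ U₁, deriv a₁ s ≠ 0) (ha₂' : ∀ u ∈ U₂, deriv a₂ u ≠ 0)
    (ha₃' : ∀ t ∈ U₃, deriv a₃ t ≠ 0)
    (hv₁ : ContDiffOn ℝ (⊤ : ℕ∞) v₁ U₁) (hv₂ : ContDiffOn ℝ (⊤ : ℕ∞) v₂ U₂)
    (hv₃ : ContDiffOn ℝ (⊤ : ℕ∞) v₃ U₃)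
    (hv₁t : ∀ s ∈ U₁, v₁ s ∉ Submodule.span ℝ {deriv a₁ s})
    (hv₂t : ∀ u ∈ U₂, v₂ u ∉ Submodule.span ℝ {deriv a₂ u})
    (hv₃t : ∀ t ∈ U₃, v₃ t ∉ Submodule.span ℝ {deriv a₃ t})
    -- 3-reflectivity data (Ω, g)
    (Ω : Set (ℝ × ℝ)) (g : ℝ × ℝ → ℝ)
    (hΩo : IsOpen Ω) (hΩne : Ω.Nonempty) (hΩ : Ω ⊆ U₁ ×ˢ U₂)
    (hg : ContinuousOn g Ω) (hgm : ∀ z ∈ Ω, g z ∈ U₃)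
    -- (i) vertices not collinear
    (hcol : ∀ z ∈ Ω, ¬ Collinear ℝ {a₁ z.1, a₂ z.2, a₃ (g z)})
    -- (ii) non-tangency
    (htan₁ : ∀ z ∈ Ω, a₂ z.2 - a₁ z.1 ∉ Submodule.span ℝ {deriv a₁ z.1} ∧
      a₃ (g z) - a₁ z.1 ∉ Submodule.span ℝ {deriv a₁ z.1})
    (htan₂ : ∀ z ∈ Ω, a₁ z.1 - a₂ z.2 ∉ Submodule.span ℝ {deriv a₂ z.2} ∧
      a₃ (g z) - a₂ z.2 ∉ Submodule.span ℝ {deriv a₂ z.2})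
    (htan₃ : ∀ z ∈ Ω, a₁ z.1 - a₃ (g z) ∉ Submodule.span ℝ {deriv a₃ (g z)} ∧
      a₂ z.2 - a₃ (g z) ∉ Submodule.span ℝ {deriv a₃ (g z)})
    -- (iii) reflection law at each vertex
    (href₁ : ∀ z ∈ Ω,
      PlaneSym ℝ (v₁ z.1) (deriv a₁ z.1) (a₂ z.2 - a₁ z.1) (a₃ (g z) - a₁ z.1))
    (href₂ : ∀ z ∈ Ω,
      PlaneSym ℝ (v₂ z.2) (deriv a₂ z.2) (a₁ z.1 - a₂ z.2) (a₃ (g z) - a₂ z.2))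
    (href₃ : ∀ z ∈ Ω,
      PlaneSym ℝ (v₃ (g z)) (deriv a₃ (g z)) (a₁ z.1 - a₃ (g z)) (a₂ z.2 - a₃ (g z))) :
    ∃ P Q R : ℝ × ℝ × ℝ, LinearIndependent ℝ ![P, Q, R] ∧
      ∃ Ω' : Set (ℝ × ℝ), Ω' ⊆ Ω ∧ Ω'.Nonempty ∧ IsOpen Ω' ∧
        ∀ z ∈ Ω',
          liftPt ℝ (a₁ z.1) ∈ Submodule.span ℝ {P, Q} ∧
          liftPt ℝ (a₂ z.2) ∈ Submodule.span ℝ {Q, R} ∧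
          liftPt ℝ (a₃ (g z)) ∈ Submodule.span ℝ {R, P} ∧
          R ∈ Submodule.span ℝ {liftPt ℝ (a₁ z.1), liftDir ℝ (v₁ z.1)} ∧
          P ∈ Submodule.span ℝ {liftPt ℝ (a₂ z.2), liftDir ℝ (v₂ z.2)} ∧
          Q ∈ Submodule.span ℝ {liftPt ℝ (a₃ (g z)), liftDir ℝ (v₃ (g z))} := by
  have sm : ∀ {U : Set ℝ} {f : ℝ → ℝ × ℝ} {t : ℝ}, IsOpen U → ContDiffOn ℝ (⊤ : ℕ∞) f U → t ∈ U →
      ContDiffAt ℝ (⊤ : ℕ∞) f t := fun hU hf ht => hf.contDiffAt (hU.mem_nhds ht)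
  have sm' : ∀ {f : ℝ → ℝ × ℝ} {t : ℝ}, ContDiffAt ℝ (⊤ : ℕ∞) f t →
      ContDiffAt ℝ (⊤ : ℕ∞) (deriv f) t := fun hf => hf.derivWithin (by norm_cast)
  have two : ∀ {f : ℝ → ℝ × ℝ} {t : ℝ}, ContDiffAt ℝ (⊤ : ℕ∞) f t → ContDiffAt ℝ 2 f t :=
    fun hf => hf.of_le (by norm_cast)
  have dd : ∀ {f : ℝ → ℝ × ℝ} {t : ℝ}, ContDiffAt ℝ (⊤ : ℕ∞) f t → HasDerivAt f (deriv f t) t :=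
    fun hf => ((two hf).differentiableAt (by norm_num)).hasDerivAt
  have m1 : ∀ z ∈ Ω, z.1 ∈ U₁ := fun z hz => (hΩ hz).1
  have m2 : ∀ z ∈ Ω, z.2 ∈ U₂ := fun z hz => (hΩ hz).2
  have s1 : ∀ z ∈ Ω, ContDiffAt ℝ (⊤ : ℕ∞) a₁ z.1 := fun z hz => sm hU₁o ha₁ (m1 z hz)
  have s2 : ∀ z ∈ Ω, ContDiffAt ℝ (⊤ : ℕ∞) a₂ z.2 := fun z hz => sm hU₂o ha₂ (m2 z hz)
  have s3 : ∀ z ∈ Ω, ContDiffAt ℝ (⊤ : ℕ∞) a₃ (g z) := fun z hz => sm hU₃o ha₃ (hgm z hz)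
  have n1 : ∀ z ∈ Ω, cr (deriv a₁ z.1) (v₁ z.1) ≠ 0 := fun z hz =>
    cr_ne (ha₁' _ (m1 z hz)) (hv₁t _ (m1 z hz))
  have b1 : ∀ z ∈ Ω, cr (deriv a₁ z.1) (a₂ z.2 - a₁ z.1) ≠ 0 := fun z hz =>
    cr_ne (ha₁' _ (m1 z hz)) (htan₁ z hz).1
  have a3 : ∀ z ∈ Ω, cr (deriv a₃ (g z)) (a₁ z.1 - a₃ (g z)) ≠ 0 := fun z hz =>
    cr_ne (ha₃' _ (hgm z hz)) (htan₃ z hz).1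
  have r1 := fun z hz => planeSym_cr (href₁ z hz)
  refine final (Ω := Ω) (A := deriv a₁) (B := deriv a₂) (C := deriv a₃) (A2 := deriv (deriv a₁))
    (B2 := deriv (deriv a₂)) (C2 := deriv (deriv a₃)) ?_ hΩne
  exact
    { op := hΩo
      dg := fun z hz => g_smooth (two (s1 z hz)) (two (sm' (s1 z hz)))
        (two (sm hU₁o hv₁ (m1 z hz))) (two (s2 z hz)) (two (s3 z hz)) (dd (s3 z hz))
        (hg.continuousAt (hΩo.mem_nhds hz)) (n1 z hz) (b1 z hz) (a3 z hz)
        (by filter_upwards [hΩo.mem_nhds hz] with z' hz' using r1 z' hz')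
      da := fun z hz => dd (s1 z hz)
      db := fun z hz => dd (s2 z hz)
      dc := fun z hz => dd (s3 z hz)
      dA := fun z hz => dd (sm' (s1 z hz))
      dB := fun z hz => dd (sm' (s2 z hz))
      dC := fun z hz => dd (sm' (s3 z hz))
      dv := fun z hz => (dd (sm hU₃o hv₃ (hgm z hz))).differentiableAt
      n1 := n1
      n2 := fun z hz => cr_ne (ha₂' _ (m2 z hz)) (hv₂t _ (m2 z hz))
      n3 := fun z hz => cr_ne (ha₃' _ (hgm z hz)) (hv₃t _ (hgm z hz))
      b1 := b1
      c1 := fun z hz => cr_ne (ha₁' _ (m1 z hz)) (htan₁ z hz).2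
      a2 := fun z hz => cr_ne (ha₂' _ (m2 z hz)) (htan₂ z hz).1
      c2 := fun z hz => cr_ne (ha₂' _ (m2 z hz)) (htan₂ z hz).2
      a3 := a3
      b3 := fun z hz => cr_ne (ha₃' _ (hgm z hz)) (htan₃ z hz).2
      D := fun z hz h0 => hcol z hz (collinear_of_cr h0 (fun e => (htan₁ z hz).1 (by
        rw [e, sub_self]; exact Submodule.zero_mem _)))
      r1 := r1
      r2 := fun z hz => planeSym_cr (href₂ z hz)
      r3 := fun z hz => planeSym_cr (href₃ z hz) }
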